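/- arXiv:1911.10731 — 2 statements merged into one kernel-verified Lean document; each statement's English description precedes it below -/
import Mathlib

section
/- Let f be a cellular automaton on A^ℤ. If the generic limit set ω̃(f) is a minimal subshift (it has no nonempty proper closed σ-invariant subset), then its language L(ω̃(f)) is a Σ⁰₂ set of words. -/
open Filter Set Function

namespace Gls

variable {A : Type*}

/-- The left shift map on `A^ℤ`. -/
def shift (x : ℤ → A) : ℤ → A := fun i => x (i + 1)

/-- A cellular automaton: a continuous shift-commuting self-map of the full shift. -/
def IsCA [TopologicalSpace A] (f : (ℤ → A) → (ℤ → A)) : Prop :=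
  Continuous f ∧ f ∘ shift = shift ∘ f

/-- The set of limit points of the forward orbit of `x` under `f`. -/
def omegaSet [TopologicalSpace A] (f : (ℤ → A) → (ℤ → A)) (x : ℤ → A) : Set (ℤ → A) :=
  {y | MapClusterPt y atTop fun t => f^[t] x}

/-- The realm of attraction of `Y`. -/
def realm [TopologicalSpace A] (f : (ℤ → A) → (ℤ → A)) (Y : Set (ℤ → A)) : Set (ℤ → A) :=
  {x | omegaSet f x ⊆ Y}

/-- The generic limit set: the intersection of all closed sets whose realm is comeager. -/
def genLimitSet [TopologicalSpace A] (f : (ℤ → A) → (ℤ → A)) : Set (ℤ → A) :=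
  ⋂₀ {C | IsClosed C ∧ realm f C ∈ residual (ℤ → A)}

/-- The word `x_{[i, i+n)}` of length `n` read in the configuration `x` from position `i`. -/
def word (x : ℤ → A) (i : ℤ) (n : ℕ) : List A :=
  (List.range n).map fun k => x (i + k)

/-- The cylinder set `[w]_i`. -/
def cylinder (w : List A) (i : ℤ) : Set (ℤ → A) := {x | word x i w.length = w}

/-- The language of `X`: all finite words occurring in points of `X`. -/
def lang (X : Set (ℤ → A)) : Set (List A) :=
  {w | ∃ x ∈ X, ∃ i : ℤ, word x i w.length = w}


/-- The arithmetical hierarchy over `ℕ`: `NatSigma 0` is the class of computable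
predicates, and a predicate is `NatSigma (n+1)` (i.e. `Σ⁰ₙ₊₁`) if it is of the form
`{a | ∃ k, (a, k) ∈ R}` for a `Π⁰ₙ` relation `R` (i.e. a relation whose complement is `Σ⁰ₙ`). -/
def NatSigma : ℕ → (ℕ → Prop) → Prop
  | 0 => fun P => ComputablePred P
  | (n + 1) => fun P =>
      ∃ R : ℕ → Prop, NatSigma n (fun a => ¬ R a) ∧ ∀ a, P a ↔ ∃ k, R (Nat.pair a k)

/-- A set of words is `Σ⁰ₙ` if, identifying words with natural numbers via the canonical
computable encoding, it is a `Σ⁰ₙ` subset of `ℕ`. -/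
def SigmaLang {A : Type*} [Primcodable A] (n : ℕ) (P : Set (List A)) : Prop :=
  NatSigma n (fun m => ∃ w : List A, Encodable.encode w = m ∧ w ∈ P)

/-- A set of words is `Π⁰ₙ` if its complement is `Σ⁰ₙ`. -/
def PiLang {A : Type*} [Primcodable A] (n : ℕ) (P : Set (List A)) : Prop :=
  SigmaLang n {w | w ∉ P}

/-!
Write `X` for the generic limit set. If `X` is minimal, a word `w` of its language occurs in every
point of `X`, and by compactness within a bounded window. The realm of `X` is comeager, and each of
its points eventually stays in the clopen set of configurations showing `w` in that window, so by
Baire the whole of some cylinder `[v]` does so from a common time on; lengthening `v`, both the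
window and the time may be bounded by `|v|`. Conversely, if every orbit starting in `[v]` shows `w`
in this way, so do the limit points of an orbit that starts in `[v]` and in the dense realm, and
these belong to `X`. Hence `w ∈ L(X)` if and only if there is a `v` such that, for all `t ≥ |v|`,
all images `f^t(x)` with `x ∈ [v]` show `w` inside `[0, |v|)`. For fixed `t` these images depend
only on `v` with `r * t` further letters on each side, where `r` is a radius of `f`, so this is a
`∃∀` formula with a computable matrix.
-/

section Computability

theorem natSigma_two_exists_forall {γ δ : Type*} [Primcodable γ] [Primcodable δ] [Nonempty γ]
    [Nonempty δ] {Q : ℕ → γ → δ → Prop}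
    (hQ : ComputablePred fun z : ℕ × γ × δ => Q z.1 z.2.1 z.2.2) :
    NatSigma 2 fun m => ∃ c, ∀ d, Q m c d := by
  inhabit γ
  inhabit δ
  obtain ⟨_, hQ⟩ := hQ
  let toγ : ℕ → γ := fun k => (Encodable.decode k).getD default
  let toδ : ℕ → δ := fun l => (Encodable.decode l).getD default
  have toγ_surjective : Surjective toγ := fun c => ⟨Encodable.encode c, by simp [toγ]⟩
  have toδ_surjective : Surjective toδ := fun d => ⟨Encodable.encode d, by simp [toδ]⟩
  have hγ : Primrec toγ := Primrec.option_getD_default.comp Primrec.decode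
  have hδ : Primrec toδ := Primrec.option_getD_default.comp Primrec.decode
  let fst : ℕ → ℕ := fun b => b.unpair.1
  let snd : ℕ → ℕ := fun b => b.unpair.2
  have hfst : Primrec fst := Primrec.fst.comp Primrec.unpair
  have hsnd : Primrec snd := Primrec.snd.comp Primrec.unpair
  have matrix_computable :
      ComputablePred fun b => Q (fst (fst b)) (toγ (snd (fst b))) (toδ (snd b)) :=
    (hQ.comp (Primrec.pair (hfst.comp hfst)
      (Primrec.pair (hγ.comp (hsnd.comp hfst)) (hδ.comp hsnd))).to_comp).computablePred
  refine ⟨fun a => ∀ l, Q (fst a) (toγ (snd a)) (toδ l),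
    ⟨fun b => ¬ Q (fst (fst b)) (toγ (snd (fst b))) (toδ (snd b)), ?_, fun a => ?_⟩, fun m => ?_⟩
  · exact matrix_computable.of_eq fun b => not_not.symm
  · simp only [fst, snd, Nat.unpair_pair, not_forall]
  · simp only [fst, snd, Nat.unpair_pair, toγ_surjective.exists, toδ_surjective.forall]

theorem sigmaLang_two_exists_forall [Primcodable A] {γ δ : Type*} [Primcodable γ] [Primcodable δ]
    [Nonempty γ] [Nonempty δ] {Q : List A → γ → δ → Prop}
    (hQ : ComputablePred fun z : List A × γ × δ => Q z.1 z.2.1 z.2.2) :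
    SigmaLang 2 {w | ∃ c, ∀ d, Q w c d} := by
  classical
  have hR : ComputablePred fun z : ℕ × (List A × γ) × δ =>
      Encodable.encode z.2.1.1 = z.1 ∧ Q z.2.1.1 z.2.1.2 z.2.2 := by
    have hw : Primrec fun z : ℕ × (List A × γ) × δ => z.2.1.1 :=
      Primrec.fst.comp (Primrec.fst.comp Primrec.snd)
    have reassoc : Primrec fun z : ℕ × (List A × γ) × δ => (z.2.1.1, z.2.1.2, z.2.2) :=
      hw.pair ((Primrec.snd.comp (Primrec.fst.comp Primrec.snd)).pair
        (Primrec.snd.comp Primrec.snd))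
    have encode_eq : PrimrecPred fun z : ℕ × (List A × γ) × δ => Encodable.encode z.2.1.1 = z.1 :=
      Primrec.eq.comp (Primrec.encode.comp hw) Primrec.fst
    refine Computable.computablePred ?_
    exact (Primrec.and.to_comp.comp encode_eq.decide.to_comp
      (hQ.decide.comp reassoc.to_comp)).of_eq fun z => (Bool.decide_and _ _).symm
  have h := natSigma_two_exists_forall
    (Q := fun m (c : List A × γ) d => Encodable.encode c.1 = m ∧ Q c.1 c.2 d) hR
  simpa only [SigmaLang, mem_ofPred_eq, Prod.exists, forall_and_left, exists_and_left] using h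

theorem primrecRel_isInfix {α : Type*} [Primcodable α] :
    PrimrecRel fun u v : List α => u <:+: v := by
  have matchesAt : PrimrecRel fun (i : ℕ) (z : List α × List α) =>
      z.1 = (z.2.drop i).take z.1.length := by
    have hu : Primrec fun y : ℕ × List α × List α => y.2.1 := Primrec.fst.comp Primrec.snd
    exact Primrec.eq.comp hu (Primrec.list_take.comp (Primrec.list_length.comp hu)
      (Primrec.list_drop.comp Primrec.fst (Primrec.snd.comp Primrec.snd)))
  refine (matchesAt.exists_mem_list.comp (Primrec.list_range.comp
    (Primrec.succ.comp (Primrec.list_length.comp Primrec.snd))) Primrec.id).of_eq ?_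
  rintro ⟨u, v⟩
  simp only [id, List.mem_range, ← List.prefix_iff_eq_take]
  constructor
  · rintro ⟨i, -, h⟩
    exact h.isInfix.trans (List.drop_suffix i v).isInfix
  · rintro ⟨s, t, rfl⟩
    exact ⟨s.length, by simp only [List.length_append]; omega, by simp⟩

end Computability

section Words

theorem word_eq_ofFn (x : ℤ → A) (i : ℤ) (n : ℕ) :
    word x i n = List.ofFn fun k : Fin n => x (i + k) := by
  -- In `word` the list `List.range n` is coerced to `List ℤ` through the list monad.
  have coe_range : (do let k ← List.range n; pure (k : ℤ)) =
      (List.range n).map fun k : ℕ => (k : ℤ) :=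
    List.flatMap_pure_eq_map _ _
  rw [word, coe_range, List.map_map]
  apply List.ext_getElem <;> simp

@[simp]
theorem length_word (x : ℤ → A) (i : ℤ) (n : ℕ) : (word x i n).length = n := by
  simp [word_eq_ofFn]

theorem word_add (x : ℤ → A) (i : ℤ) (m n : ℕ) :
    word x i (m + n) = word x i m ++ word x (i + m) n := by
  simp [word_eq_ofFn, List.ofFn_add, add_assoc]

theorem getI_word [Inhabited A] (x : ℤ → A) (i : ℤ) {n k : ℕ} (hk : k < n) :
    (word x i n).getI k = x (i + k) := by
  rw [List.getI_eq_getElem _ (by simpa using hk)]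
  simp [word_eq_ofFn]

theorem mem_cylinder {w : List A} {i : ℤ} {x : ℤ → A} :
    x ∈ cylinder w i ↔ word x i w.length = w :=
  Iff.rfl

theorem mem_cylinder_word {x y : ℤ → A} {i j : ℤ} {n : ℕ} :
    x ∈ cylinder (word y j n) i ↔ word x i n = word y j n := by
  rw [mem_cylinder, length_word]

theorem mem_cylinder_append {u v : List A} {i : ℤ} {x : ℤ → A} :
    x ∈ cylinder (u ++ v) i ↔ x ∈ cylinder u i ∧ x ∈ cylinder v (i + u.length) := by
  rw [mem_cylinder, List.length_append, word_add]
  exact ⟨fun h => List.append_inj h (length_word _ _ _), fun h => congrArg₂ _ h.1 h.2⟩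

theorem cylinder_nonempty [Inhabited A] (w : List A) (i : ℤ) : (cylinder w i).Nonempty := by
  refine ⟨fun k => w.getI (k - i).toNat, ?_⟩
  rw [mem_cylinder, word_eq_ofFn]
  apply List.ext_getElem
  · simp
  · intro k _ hk
    simp [List.getI_eq_getElem _ hk]

theorem word_infix_word (x : ℤ → A) {i j : ℤ} {m n : ℕ} (hij : i ≤ j) (hmn : j + m ≤ i + n) :
    word x j m <:+: word x i n := by
  obtain ⟨a, rfl⟩ := Int.le.dest hij
  obtain ⟨b, rfl⟩ : ∃ b, n = a + m + b := ⟨n - (a + m), by omega⟩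
  rw [word_add, word_add]
  exact ⟨_, _, rfl⟩

theorem exists_mem_cylinder_of_infix {w : List A} {x : ℤ → A} {i : ℤ} {n : ℕ}
    (h : w <:+: word x i n) : ∃ j, x ∈ cylinder w j := by
  obtain ⟨s, t, hst⟩ := h
  have hx : x ∈ cylinder (s ++ w ++ t) i := hst ▸ mem_cylinder_word.2 rfl
  exact ⟨_, (mem_cylinder_append.1 (mem_cylinder_append.1 hx).1).2⟩

/-- The central word `x_{[-K, K]}` of a configuration. -/
def centralWord (x : ℤ → A) (K : ℕ) : List A := word x (-K) (2 * K + 1)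

theorem centralWord_infix_centralWord (x : ℤ → A) {K M : ℕ} (h : K ≤ M) :
    centralWord x K <:+: centralWord x M :=
  word_infix_word x (by omega) (by omega)

theorem exists_infix_centralWord {w : List A} {x : ℤ → A} {i : ℤ} (h : x ∈ cylinder w i) :
    ∃ K, w <:+: centralWord x K := by
  refine ⟨i.natAbs + w.length, ?_⟩
  nth_rw 1 [← mem_cylinder.1 h]
  exact word_infix_word x (by omega) (by omega)

theorem centralWord_eq_iff {x y : ℤ → A} {K : ℕ} :
    centralWord x K = centralWord y K ↔ ∀ i : ℤ, i.natAbs ≤ K → x i = y i := by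
  simp only [centralWord, word_eq_ofFn, List.ofFn_inj, funext_iff]
  constructor
  · intro h i hi
    simpa [Int.toNat_of_nonneg (show 0 ≤ i + K by omega)] using h ⟨(i + K).toNat, by omega⟩
  · exact fun h k => h _ (by omega)

theorem centralWord_eq_of_le {x y : ℤ → A} {K M : ℕ} (h : K ≤ M)
    (hxy : centralWord x M = centralWord y M) : centralWord x K = centralWord y K :=
  centralWord_eq_iff.2 fun i hi => centralWord_eq_iff.1 hxy i (hi.trans h)

end Words

section Translation

variable [TopologicalSpace A]

/-- The `j`-th power of the shift, for any `j : ℤ`, as a homeomorphism of the full shift. -/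
def translate (j : ℤ) : (ℤ → A) ≃ₜ (ℤ → A) where
  toFun x i := x (i + j)
  invFun x i := x (i - j)
  left_inv x := by simp
  right_inv x := by simp
  continuous_toFun := continuous_pi fun i => continuous_apply (i + j)
  continuous_invFun := continuous_pi fun i => continuous_apply (i - j)

theorem translate_apply (j : ℤ) (x : ℤ → A) (i : ℤ) : translate j x i = x (i + j) := rfl

theorem translate_add (j k : ℤ) (x : ℤ → A) :
    translate (j + k) x = translate j (translate k x) := by
  funext i
  simp only [translate_apply, add_assoc]

theorem translate_zero (x : ℤ → A) : translate 0 x = x := by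
  funext i
  simp only [translate_apply, add_zero]

theorem coe_translate_one : ⇑(translate 1 : (ℤ → A) ≃ₜ (ℤ → A)) = shift := rfl

theorem word_translate (j : ℤ) (x : ℤ → A) (i : ℤ) (n : ℕ) :
    word (translate j x) i n = word x (i + j) n := by
  simp only [word_eq_ofFn, translate_apply, add_right_comm]

theorem translate_mem_cylinder {j : ℤ} {x : ℤ → A} {w : List A} {i : ℤ} :
    translate j x ∈ cylinder w i ↔ x ∈ cylinder w (i + j) := by
  rw [mem_cylinder, mem_cylinder, word_translate]

theorem translate_image_iUnion_cylinder (j : ℤ) (w : List A) :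
    translate j '' (⋃ i, cylinder w i) = ⋃ i, cylinder w i := by
  have preimage_eq : translate j ⁻¹' (⋃ i, cylinder w i) = ⋃ i, cylinder w i := by
    ext x
    simp only [mem_preimage, mem_iUnion, translate_mem_cylinder]
    exact (Equiv.addRight j).exists_congr fun i => Iff.rfl
  conv_lhs => rw [← preimage_eq]
  exact image_preimage_eq _ (translate j).surjective

theorem commute_translate {f : (ℤ → A) → (ℤ → A)} (hf : Function.Commute f shift) (j : ℤ) :
    Function.Commute f (translate j) := by
  have hadd {j k : ℤ} (hj : Function.Commute f (translate j))
      (hk : Function.Commute f (translate k)) : Function.Commute f (translate (j + k)) := by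
    intro x
    rw [translate_add, translate_add, hj.eq, hk.eq]
  have hneg : Function.Commute f (translate (-1)) :=
    Semiconj.inverses_right hf
      (fun x => by rw [← coe_translate_one, ← translate_add, add_neg_cancel, translate_zero])
      (fun x => by rw [← coe_translate_one, ← translate_add, neg_add_cancel, translate_zero])
  induction j using Int.induction_on with
  | zero => exact fun x => by rw [translate_zero, translate_zero]
  | succ i ih => exact hadd ih hf
  | pred i ih => exact hadd ih hneg

end Translation

section WordTopology

variable [TopologicalSpace A]

theorem eventually_cylinder_centralWord_subset {U : Set (ℤ → A)} (hU : IsOpen U) {x : ℤ → A}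
    (hx : x ∈ U) : ∀ᶠ K : ℕ in atTop, cylinder (centralWord x K) (-K) ⊆ U := by
  obtain ⟨I, u, hu, hIU⟩ := isOpen_pi_iff.1 hU x hx
  filter_upwards [eventually_ge_atTop (I.sup Int.natAbs)] with K hK y hy
  refine hIU fun i hi => ?_
  rw [centralWord_eq_iff.1 (mem_cylinder_word.1 hy) i
    ((Finset.le_sup (f := Int.natAbs) hi).trans hK)]
  exact (hu i hi).2

variable [DiscreteTopology A]

theorem isLocallyConstant_word (i : ℤ) (n : ℕ) :
    IsLocallyConstant fun x : ℤ → A => word x i n := by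
  simp only [word_eq_ofFn]
  have letters : IsLocallyConstant fun (x : ℤ → A) (k : Fin n) => x (i + k) :=
    (IsLocallyConstant.iff_continuous _).2 (by fun_prop)
  exact letters.comp List.ofFn

theorem isLocallyConstant_centralWord (K : ℕ) :
    IsLocallyConstant fun x : ℤ → A => centralWord x K :=
  isLocallyConstant_word _ _

theorem isOpen_cylinder (w : List A) (i : ℤ) : IsOpen (cylinder w i) :=
  (isLocallyConstant_word i w.length).isOpen_fiber w

theorem exists_centralWord_determines [Finite A] {β : Type*} {φ : (ℤ → A) → β}
    (hφ : IsLocallyConstant φ) :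
    ∃ K, ∀ x y, centralWord x K = centralWord y K → φ x = φ y := by
  let V : ℕ → Set (ℤ → A) := fun K =>
    (centralWord · K) ⁻¹' {u | ∀ y z, centralWord y K = u → centralWord z K = u → φ y = φ z}
  have V_open (K : ℕ) : IsOpen (V K) := isLocallyConstant_centralWord K _
  have V_mono : Monotone V := fun K M hKM x hx y z hy hz =>
    hx y z (centralWord_eq_of_le hKM hy) (centralWord_eq_of_le hKM hz)
  have V_cover : univ ⊆ ⋃ K, V K := fun x _ => by
    obtain ⟨K, hK⟩ := (eventually_cylinder_centralWord_subset (hφ.isOpen_fiber (φ x)) rfl).exists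
    refine mem_iUnion.2 ⟨K, fun y z hy hz => ?_⟩
    exact (hK (mem_cylinder_word.2 hy)).trans (hK (mem_cylinder_word.2 hz)).symm
  obtain ⟨K, hK⟩ := isCompact_univ.elim_directed_cover V V_open V_cover V_mono.directed_le
  exact ⟨K, fun x y hxy => hK (mem_univ y) x y hxy rfl⟩

end WordTopology

section LocalRule

/-- `f` is the sliding block code of radius `r` with local rule `g`; by the Curtis–Hedlund–Lyndon
theorem every cellular automaton over a finite alphabet is of this form. -/
def HasLocalRule (f : (ℤ → A) → (ℤ → A)) (r : ℕ) (g : (Fin (2 * r + 1) → A) → A) : Prop :=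
  ∀ x i, f x i = g fun k => x (i - r + k)

theorem exists_hasLocalRule [Finite A] [Nonempty A] [TopologicalSpace A] [DiscreteTopology A]
    {f : (ℤ → A) → (ℤ → A)} (hf : Continuous f) (hcomm : Function.Commute f shift) :
    ∃ r g, HasLocalRule f r g := by
  have zeroth_letter : IsLocallyConstant fun x => f x 0 :=
    (IsLocallyConstant.iff_continuous _).2 ((continuous_apply 0).comp hf)
  obtain ⟨r, hr⟩ := exists_centralWord_determines zeroth_letter
  let window : (ℤ → A) → Fin (2 * r + 1) → A := fun x k => x (-r + k)
  have factors : FactorsThrough (fun x => f x 0) window := fun x y hxy =>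
    hr x y (by simpa only [centralWord, word_eq_ofFn] using congrArg List.ofFn hxy)
  refine ⟨r, extend window (fun x => f x 0) fun _ => Classical.arbitrary A, fun x i => ?_⟩
  have window_translate : (fun k : Fin (2 * r + 1) => x (i - r + k)) = window (translate i x) := by
    funext k
    simp only [window, translate_apply]
    congr 1
    ring
  rw [window_translate, factors.extend_apply, (commute_translate hcomm i).eq, translate_apply,
    zero_add]

variable {f : (ℤ → A) → (ℤ → A)} {r : ℕ} {g : (Fin (2 * r + 1) → A) → A}

/-- One step of the automaton with local rule `g` on finite words; the image of a word is shorter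
by `2 * r`. -/
def wordStep [Inhabited A] (r : ℕ) (g : (Fin (2 * r + 1) → A) → A) (u : List A) : List A :=
  (List.range (u.length - 2 * r)).map fun i => g fun k => u.getI (i + k)

theorem primrec_wordStep [Finite A] [Inhabited A] [Primcodable A] (r : ℕ)
    (g : (Fin (2 * r + 1) → A) → A) : Primrec (wordStep r g) := by
  refine Primrec.list_map (Primrec.list_range.comp
    (Primrec.nat_sub.comp Primrec.list_length (Primrec.const _))) ?_
  have window : Primrec fun (z : List A × ℕ) (k : Fin (2 * r + 1)) => z.1.getI (z.2 + k) :=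
    Primrec.fin_curry.2 (Primrec.list_getI.comp (Primrec.fst.comp Primrec.fst)
      (Primrec.nat_add.comp (Primrec.snd.comp Primrec.fst) (Primrec.fin_val.comp Primrec.snd)))
  exact (Primrec.dom_finite g).comp window

theorem HasLocalRule.wordStep_word [Inhabited A] (hg : HasLocalRule f r g) (x : ℤ → A) (i : ℤ)
    (n : ℕ) : wordStep r g (word x i (n + 2 * r)) = word (f x) (i + r) n := by
  apply List.ext_getElem
  · simp [wordStep]
  · intro j hj _
    have hj : j < n := by simpa [wordStep] using hj
    simp only [wordStep, word_eq_ofFn (f x), List.getElem_map, List.getElem_range,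
      List.getElem_ofFn]
    rw [hg x (i + r + j)]
    congr 1
    funext k
    rw [getI_word x i (by omega)]
    congr 1
    push_cast
    ring

theorem HasLocalRule.iterate_wordStep_word [Inhabited A] (hg : HasLocalRule f r g) (t : ℕ)
    (x : ℤ → A) (i : ℤ) (n : ℕ) :
    (wordStep r g)^[t] (word x i (n + 2 * (r * t))) = word (f^[t] x) (i + r * t) n := by
  induction t generalizing x i with
  | zero => simp
  | succ t ih =>
    have add_step : n + 2 * (r * (t + 1)) = n + 2 * (r * t) + 2 * r := by ring
    rw [iterate_succ_apply, iterate_succ_apply, add_step, hg.wordStep_word, ih]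
    congr 1
    push_cast
    ring

theorem HasLocalRule.forall_cylinder_iterate_iff [Inhabited A] (hg : HasLocalRule f r g)
    (P : List A → Prop) (v : List A) (t : ℕ) :
    (∀ x ∈ cylinder v 0, P (word (f^[t] x) 0 v.length)) ↔
      ∀ p s : List A, p.length = r * t → s.length = r * t →
        P ((wordStep r g)^[t] (p ++ v ++ s)) := by
  have length_eq : r * t + v.length + r * t = v.length + 2 * (r * t) := by ring
  have key (x : ℤ → A) : (wordStep r g)^[t] (word x (-(r * t : ℕ)) (r * t + v.length + r * t)) =
      word (f^[t] x) 0 v.length := by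
    rw [length_eq, hg.iterate_wordStep_word, Nat.cast_mul, neg_add_cancel]
  constructor
  · intro h p s hp hs
    obtain ⟨x, hx⟩ := cylinder_nonempty (p ++ v ++ s) (-(r * t : ℕ))
    have hv : x ∈ cylinder v 0 := by
      simpa [hp] using (mem_cylinder_append.1 (mem_cylinder_append.1 hx).1).2
    rw [mem_cylinder, List.length_append, List.length_append, hp, hs] at hx
    rw [← hx, key]
    exact h x hv
  · intro h x hx
    have hx' : word x (-(r * t : ℕ)) (r * t + v.length + r * t) =
        word x (-(r * t : ℕ)) (r * t) ++ v ++ word x v.length (r * t) := by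
      rw [word_add, word_add, neg_add_cancel, mem_cylinder.1 hx]
      simp
    rw [← key, hx']
    exact h _ _ (length_word _ _ _) (length_word _ _ _)

/-- The word `v` forces `w`: every configuration with `v` at the origin has `w` inside the window
`[0, |v|)` at all times `t ≥ |v|`. The one parameter `|v|` can bound both the window and the time
because lengthening `v` on both sides is harmless. -/
def Forces (f : (ℤ → A) → (ℤ → A)) (v w : List A) : Prop :=
  ∀ t ≥ v.length, ∀ x ∈ cylinder v 0, w <:+: word (f^[t] x) 0 v.length

/-- The matrix of the `Σ⁰₂` definition of the language of a minimal generic limit set: if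
`d = (t, p, s)` is a time `t ≥ |v|` and a pair of paddings of length `r * t`, then `w` occurs in the
word obtained from `p ++ v ++ s` by `t` steps of `F`. -/
def OccursAfterPadding (r : ℕ) (F : List A → List A) (w v : List A) (d : ℕ × List A × List A) :
    Prop :=
  v.length ≤ d.1 → d.2.1.length = r * d.1 → d.2.2.length = r * d.1 →
    w <:+: F^[d.1] (d.2.1 ++ v ++ d.2.2)

theorem computablePred_occursAfterPadding [Primcodable A] {F : List A → List A} (hF : Primrec F)
    (r : ℕ) : ComputablePred fun z : List A × List A × ℕ × List A × List A =>
      OccursAfterPadding r F z.1 z.2.1 z.2.2 := by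
  classical
  have imp {p q : List A × List A × ℕ × List A × List A → Prop} (hp : PrimrecPred p)
      (hq : PrimrecPred q) : PrimrecPred fun z => p z → q z :=
    (hp.not.or hq).of_eq fun z => imp_iff_not_or.symm
  let D := List A × List A × ℕ × List A × List A
  have hw : Primrec fun z : D => z.1 := Primrec.fst
  have hv : Primrec fun z : D => z.2.1 := Primrec.fst.comp Primrec.snd
  have hd : Primrec fun z : D => z.2.2 := Primrec.snd.comp Primrec.snd
  have ht : Primrec fun z : D => z.2.2.1 := Primrec.fst.comp hd
  have hp : Primrec fun z : D => z.2.2.2.1 := Primrec.fst.comp (Primrec.snd.comp hd)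
  have hs : Primrec fun z : D => z.2.2.2.2 := Primrec.snd.comp (Primrec.snd.comp hd)
  have hrt : Primrec fun z : D => r * z.2.2.1 := Primrec.nat_mul.comp (Primrec.const r) ht
  have image_word : Primrec fun z : D => F^[z.2.2.1] (z.2.2.2.1 ++ z.2.1 ++ z.2.2.2.2) :=
    Primrec.nat_iterate ht (Primrec.list_append.comp (Primrec.list_append.comp hp hv) hs)
      (hF.comp Primrec.snd)
  exact (imp (Primrec.nat_le.comp (Primrec.list_length.comp hv) ht)
    (imp (Primrec.eq.comp (Primrec.list_length.comp hp) hrt)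
    (imp (Primrec.eq.comp (Primrec.list_length.comp hs) hrt)
    (primrecRel_isInfix.comp hw image_word)))).computablePred

theorem HasLocalRule.forall_occursAfterPadding_iff_forces [Inhabited A] (hg : HasLocalRule f r g)
    (w v : List A) : (∀ d, OccursAfterPadding r (wordStep r g) w v d) ↔ Forces f v w := by
  simp only [Forces, hg.forall_cylinder_iterate_iff (w <:+: ·), OccursAfterPadding, Prod.forall,
    ge_iff_le]
  exact forall_congr' fun t => ⟨fun h ht p s => h p s ht, fun h p s ht => h ht p s⟩

end LocalRule

section GenericLimitSet

variable [TopologicalSpace A] {f : (ℤ → A) → (ℤ → A)}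

theorem isClosed_genLimitSet : IsClosed (genLimitSet f) :=
  isClosed_sInter fun _ hC => hC.1

theorem realm_genLimitSet_mem_residual [SecondCountableTopology A] :
    realm f (genLimitSet f) ∈ residual (ℤ → A) := by
  let S : Set (Set (ℤ → A)) := {C | IsClosed C ∧ realm f C ∈ residual (ℤ → A)}
  obtain ⟨T, T_countable, T_subset, T_union⟩ :=
    TopologicalSpace.isOpen_sUnion_countable (compl '' S) (by
      rintro _ ⟨C, hC, rfl⟩
      exact hC.1.isOpen_compl)
  have T_residual : ∀ U ∈ T, realm f Uᶜ ∈ residual (ℤ → A) := fun U hU => by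
    obtain ⟨C, hC, rfl⟩ := T_subset hU
    simpa only [compl_compl] using hC.2
  have compl_genLimitSet : (genLimitSet f)ᶜ = ⋃₀ T := by
    rw [T_union, genLimitSet, compl_sInter]
  filter_upwards [(countable_bInter_mem T_countable).2 T_residual] with x hx y hy
  by_contra hyf
  obtain ⟨U, hU, hyU⟩ := compl_genLimitSet.subset hyf
  exact mem_iInter₂.1 hx U hU hy hyU

theorem map_mem_omegaSet {h : (ℤ → A) → (ℤ → A)} (hh : Continuous h)
    (hcomm : Function.Commute f h) {x y : ℤ → A} (hy : y ∈ omegaSet f x) :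
    h y ∈ omegaSet f (h x) := by
  have orbit_map : (fun t => f^[t] (h x)) = h ∘ fun t => f^[t] x :=
    funext fun t => (hcomm.iterate_left t).eq x
  rw [omegaSet, mem_ofPred_eq, orbit_map]
  exact hy.continuousAt_comp hh.continuousAt

theorem mapsTo_genLimitSet (h : (ℤ → A) ≃ₜ (ℤ → A)) (hcomm : Function.Commute f h) :
    MapsTo h (genLimitSet f) (genLimitSet f) := by
  rintro x hx C ⟨C_closed, hC⟩
  refine hx (h ⁻¹' C) ⟨C_closed.preimage h.continuous, ?_⟩
  rw [← h.residual_map_eq] at hC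
  filter_upwards [hC] with z hz y hy
  exact hz (map_mem_omegaSet h.continuous hcomm hy)

theorem image_genLimitSet (h : (ℤ → A) ≃ₜ (ℤ → A)) (hcomm : Function.Commute f h) :
    h '' genLimitSet f = genLimitSet f := by
  have hcomm_symm : Function.Commute f h.symm :=
    Semiconj.inverses_right hcomm h.apply_symm_apply h.symm_apply_apply
  exact (mapsTo_genLimitSet h hcomm).image_subset.antisymm fun x hx =>
    ⟨h.symm x, mapsTo_genLimitSet h.symm hcomm_symm hx, h.apply_symm_apply x⟩

theorem omegaSet_nonempty [CompactSpace A] (f : (ℤ → A) → (ℤ → A)) (x : ℤ → A) :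
    (omegaSet f x).Nonempty :=
  exists_clusterPt_of_compactSpace _

theorem omegaSet_subset_of_eventually_mem {C : Set (ℤ → A)} (hC : IsClosed C) {x : ℤ → A}
    (h : ∀ᶠ t in atTop, f^[t] x ∈ C) : omegaSet f x ⊆ C :=
  fun _ hy => hC.mem_of_mapClusterPt hy h

theorem eventually_iterate_mem_of_omegaSet_subset [CompactSpace A] {U : Set (ℤ → A)}
    (hU : IsOpen U) {x : ℤ → A} (hx : omegaSet f x ⊆ U) : ∀ᶠ t in atTop, f^[t] x ∈ U := by
  by_contra! h
  obtain ⟨y, hyU, hy⟩ :=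
    hU.isClosed_compl.isCompact.exists_mapClusterPt_of_frequently h
  exact hyU (hx hy)

theorem exists_isOpen_forall_iterate_mem [CompactSpace A] [T2Space A] [SecondCountableTopology A]
    [Nonempty A] (hf : Continuous f) {U : Set (ℤ → A)} (hU : IsClopen U)
    (hfU : genLimitSet f ⊆ U) :
    ∃ V : Set (ℤ → A), IsOpen V ∧ V.Nonempty ∧ ∃ T, ∀ t ≥ T, ∀ x ∈ V, f^[t] x ∈ U := by
  let F : ℕ → Set (ℤ → A) := fun T => ⋂ t ≥ T, f^[t] ⁻¹' U
  have F_closed (T : ℕ) : IsClosed (F T) :=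
    isClosed_biInter fun t _ => hU.isClosed.preimage (hf.iterate t)
  have F_cover : realm f (genLimitSet f) ⊆ ⋃ T, F T := fun x hx => by
    obtain ⟨T, hT⟩ := eventually_atTop.1
      (eventually_iterate_mem_of_omegaSet_subset hU.isOpen (hx.trans hfU))
    exact mem_iUnion.2 ⟨T, mem_iInter₂.2 hT⟩
  obtain ⟨G, hG, G_isGδ, G_dense⟩ := mem_residual.1 (realm_genLimitSet_mem_residual (f := f))
  obtain ⟨x, hx⟩ :=
    (G_isGδ.dense_iUnion_interior_of_closed G_dense F_closed (hG.trans F_cover)).nonempty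
  obtain ⟨T, hT⟩ := mem_iUnion.1 hx
  exact ⟨interior (F T), isOpen_interior, ⟨x, hT⟩, T,
    fun t ht y hy => mem_iInter₂.1 (interior_subset hy) t ht⟩

end GenericLimitSet

section Minimality

/-- A minimal subshift: a closed shift-invariant set of configurations without nonempty proper
closed shift-invariant subsets. The empty set is allowed. -/
structure IsMinimalSubshift [TopologicalSpace A] (X : Set (ℤ → A)) : Prop where
  isClosed : IsClosed X
  shift_image : shift '' X = X
  eq_of_subset : ∀ Y ⊆ X, IsClosed Y → shift '' Y = Y → Y.Nonempty → Y = X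

variable [TopologicalSpace A] [DiscreteTopology A]

theorem IsMinimalSubshift.subset_iUnion_cylinder {X : Set (ℤ → A)} (hX : IsMinimalSubshift X)
    {w : List A} (hw : w ∈ lang X) : X ⊆ ⋃ i, cylinder w i := by
  obtain ⟨x, hxX, i, hi⟩ := hw
  rw [← sdiff_eq_empty]
  by_contra hne
  have shift_image_diff : shift '' (X \ ⋃ i, cylinder w i) = X \ ⋃ i, cylinder w i := by
    rw [← coe_translate_one, image_sdiff (translate 1).injective, coe_translate_one,
      hX.shift_image, ← coe_translate_one, translate_image_iUnion_cylinder]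
  have diff_eq := hX.eq_of_subset _ sdiff_subset
    (hX.isClosed.sdiff (isOpen_iUnion fun i => isOpen_cylinder w i)) shift_image_diff
    (nonempty_iff_ne_empty.2 hne)
  exact (diff_eq.ge hxX).2 (mem_iUnion.2 ⟨i, hi⟩)

theorem isClopen_setOf_infix_word (w : List A) (i : ℤ) (n : ℕ) :
    IsClopen {x : ℤ → A | w <:+: word x i n} :=
  ⟨⟨isLocallyConstant_word i n {u | ¬ w <:+: u}⟩, isLocallyConstant_word i n {u | w <:+: u}⟩

theorem IsMinimalSubshift.exists_forall_infix_centralWord [Finite A] {X : Set (ℤ → A)}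
    (hX : IsMinimalSubshift X) {w : List A} (hw : w ∈ lang X) :
    ∃ K, ∀ x ∈ X, w <:+: centralWord x K := by
  let O : ℕ → Set (ℤ → A) := fun K => {x | w <:+: centralWord x K}
  have O_mono : Monotone O := fun K M hKM x hx => hx.trans (centralWord_infix_centralWord x hKM)
  have O_cover : X ⊆ ⋃ K, O K := fun x hx => by
    obtain ⟨i, hi⟩ := mem_iUnion.1 (hX.subset_iUnion_cylinder hw hx)
    exact mem_iUnion.2 (exists_infix_centralWord hi)
  exact hX.isClosed.isCompact.elim_directed_cover O
    (fun K => (isClopen_setOf_infix_word w _ _).isOpen) O_cover O_mono.directed_le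

variable [Finite A] [Nonempty A] {f : (ℤ → A) → (ℤ → A)}

theorem exists_forces_of_mem_lang_genLimitSet (hf : Continuous f)
    (hcomm : Function.Commute f shift) (hmin : IsMinimalSubshift (genLimitSet f)) {w : List A}
    (hw : w ∈ lang (genLimitSet f)) :
    ∃ v, Forces f v w := by
  obtain ⟨K₀, hK₀⟩ := hmin.exists_forall_infix_centralWord hw
  obtain ⟨V, V_open, ⟨x₀, hx₀⟩, T, hT⟩ :=
    exists_isOpen_forall_iterate_mem hf (isClopen_setOf_infix_word w _ _) hK₀
  obtain ⟨K, hKV, hK⟩ := ((eventually_cylinder_centralWord_subset V_open hx₀).and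
    (eventually_ge_atTop (max K₀ T))).exists
  have length_eq : (centralWord x₀ K).length = 2 * K + 1 := length_word _ _ _
  refine ⟨centralWord x₀ K, fun t ht x hx => ?_⟩
  have translate_mem : translate K x ∈ V :=
    hKV (translate_mem_cylinder.2 (by rwa [neg_add_cancel]))
  have occurs : w <:+: centralWord (f^[t] (translate K x)) K₀ := hT t (by omega) _ translate_mem
  rw [((commute_translate hcomm K).iterate_left t).eq] at occurs
  rw [length_eq, ← neg_add_cancel (K : ℤ), ← word_translate]
  exact occurs.trans (centralWord_infix_centralWord _ (le_of_max_le_left hK))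

theorem mem_lang_genLimitSet_of_forces {v w : List A} (h : Forces f v w) :
    w ∈ lang (genLimitSet f) := by
  inhabit A
  obtain ⟨x, hxv, hx⟩ := (dense_of_mem_residual (realm_genLimitSet_mem_residual (f := f)))
    |>.inter_open_nonempty _ (isOpen_cylinder v 0) (cylinder_nonempty v 0)
  obtain ⟨y, hy⟩ := omegaSet_nonempty f x
  have occurs : w <:+: word y 0 v.length :=
    omegaSet_subset_of_eventually_mem (isClopen_setOf_infix_word w 0 v.length).isClosed
      (eventually_atTop.2 ⟨v.length, fun t ht => h t ht x hxv⟩) hy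
  exact ⟨y, hx hy, exists_mem_cylinder_of_infix occurs⟩

theorem mem_lang_genLimitSet_iff (hf : Continuous f) (hcomm : Function.Commute f shift)
    (hmin : IsMinimalSubshift (genLimitSet f)) {w : List A} :
    w ∈ lang (genLimitSet f) ↔ ∃ v, Forces f v w :=
  ⟨exists_forces_of_mem_lang_genLimitSet hf hcomm hmin,
    fun ⟨_, h⟩ => mem_lang_genLimitSet_of_forces h⟩

end Minimality

/-- if the generic limit set of a CA is a minimal subshift (it has no
nonempty proper closed shift-invariant subset), then its language is `Σ⁰₂`. -/
theorem stmt6 [Fintype A] [Nonempty A] [Primcodable A] [TopologicalSpace A]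
    [DiscreteTopology A] (f : (ℤ → A) → (ℤ → A)) (hf : IsCA f)
    (hmin : ∀ Y ⊆ genLimitSet f, IsClosed Y → shift '' Y = Y → Y.Nonempty →
      Y = genLimitSet f) :
    SigmaLang 2 (lang (genLimitSet f)) := by
  inhabit A
  have hcomm : Function.Commute f shift := semiconj_iff_comp_eq.2 hf.2
  have minimal : IsMinimalSubshift (genLimitSet f) :=
    ⟨isClosed_genLimitSet, image_genLimitSet (translate 1) hcomm, hmin⟩
  obtain ⟨r, g, hg⟩ := exists_hasLocalRule hf.1 hcomm
  have lang_eq : lang (genLimitSet f) =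
      {w | ∃ v, ∀ d, OccursAfterPadding r (wordStep r g) w v d} := by
    ext w
    simp only [mem_lang_genLimitSet_iff hf.1 hcomm minimal, mem_ofPred_eq,
      hg.forall_occursAfterPadding_iff_forces]
  rw [lang_eq]
  exact sigmaLang_two_exists_forall
    (computablePred_occursAfterPadding (primrec_wordStep r g) r)

end Gls
end

section
/- Let X ⊆ A^ℤ be a subshift and let g : X → X be a continuous map commuting with the shift σ on X (a cellular automaton on X). If g is equicontinuous (the family {g^t : t ∈ ℕ} is equicontinuous on X), then g is eventually periodic: there exist k ≥ 0 and p ≥ 1 such that g^{k+p} = g^k on X. -/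
open Filter Set Function

namespace Gls

variable {A : Type*}

/-- The restriction of the shift map to a shift-invariant set `X`. -/
def shiftRes {A : Type*} (X : Set (ℤ → A)) (h : shift '' X = X) : X → X :=
  fun x => ⟨shift x.val, h.subset (Set.mem_image_of_mem shift x.prop)⟩

/-!
An equicontinuous family of homomorphisms between subshifts is finite: by compactness and
equicontinuity, the symbol at the origin of the image takes only finitely many patterns along the
family, and by shift-equivariance this symbol determines the whole map. Applied to the family of
iterates of `g`, two of them must coincide.
-/

section Equicontinuity

variable {ι X Y β : Type*}

theorem finite_range_of_finite_range_flip {f : ι → X → β}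
    (hpt : ∀ x, (range (flip f x)).Finite) (hflip : (range (flip f)).Finite) :
    (range f).Finite := by
  have : Finite (range (flip f)) := hflip
  have hpi : (pi univ fun r : range (flip f) => range r.1).Finite :=
    Set.Finite.pi fun ⟨_, x, hx⟩ => hx ▸ hpt x
  refine (hpi.image fun φ x => φ ⟨flip f x, mem_range_self x⟩).subset ?_
  rintro _ ⟨i, rfl⟩
  exact ⟨fun r => r.1 i, fun r _ => mem_range_self i, rfl⟩

theorem setOf_apply_eq_mem_uniformity [UniformSpace Y] [CompactSpace Y] {c : Y → β}
    (hc : IsLocallyConstant c) : {p : Y × Y | c p.1 = c p.2} ∈ uniformity Y := by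
  let _ : UniformSpace β := ⊥
  exact CompactSpace.uniformContinuous_of_continuous hc.continuous (mem_principal_self _)

variable [TopologicalSpace X] [UniformSpace Y] [CompactSpace Y] {F : ι → X → Y} {c : Y → β}

theorem isLocallyConstant_flip_comp_of_equicontinuous (hF : Equicontinuous F)
    (hc : IsLocallyConstant c) : IsLocallyConstant (flip fun i => c ∘ F i) := by
  rw [IsLocallyConstant.iff_eventually_eq]
  intro x
  filter_upwards [hF x _ (setOf_apply_eq_mem_uniformity hc)] with y hy
  exact funext fun i => (hy i).symm

theorem finite_range_comp_of_equicontinuous [CompactSpace X] (hF : Equicontinuous F)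
    (hc : IsLocallyConstant c) : (range fun i => c ∘ F i).Finite :=
  finite_range_of_finite_range_flip
    (fun x => hc.range_finite.subset (range_comp_subset_range (F · x) c))
    (isLocallyConstant_flip_comp_of_equicontinuous hF hc).range_finite

end Equicontinuity

section SubshiftHom

variable {B : Type*} {X : Set (ℤ → A)} {Y : Set (ℤ → B)}
  {hX : shift '' X = X} {hY : shift '' Y = Y}

theorem shiftRes_surjective (hX : shift '' X = X) : Surjective (shiftRes X hX) := by
  intro x
  obtain ⟨y, hy, hyx⟩ := hX.symm.subset x.2
  exact ⟨⟨y, hy⟩, Subtype.ext hyx⟩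

theorem iterate_shiftRes_apply (n : ℕ) (x : X) (i : ℤ) :
    ((shiftRes X hX)^[n] x).1 i = x.1 (i + n) := by
  induction n generalizing x with
  | zero => simp
  | succ n ih =>
    rw [iterate_succ_apply, ih]
    exact congrArg x.1 (by push_cast; ring)

theorem eq_of_semiconj_shiftRes_of_apply_zero_eq {f g : X → Y}
    (hf : Semiconj f (shiftRes X hX) (shiftRes Y hY))
    (hg : Semiconj g (shiftRes X hX) (shiftRes Y hY))
    (h0 : ∀ x, (f x).1 0 = (g x).1 0) : f = g := by
  ext x i
  obtain ⟨n, rfl | rfl⟩ := i.eq_nat_or_neg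
  · have hn := h0 ((shiftRes X hX)^[n] x)
    simpa only [(hf.iterate_right n).eq, (hg.iterate_right n).eq, iterate_shiftRes_apply,
      zero_add] using hn
  · obtain ⟨y, rfl⟩ := (shiftRes_surjective hX).iterate n x
    simpa only [(hf.iterate_right n).eq, (hg.iterate_right n).eq, iterate_shiftRes_apply,
      neg_add_cancel] using h0 y

theorem finite_range_of_equicontinuous_of_semiconj_shiftRes {ι : Type*} [TopologicalSpace A]
    [UniformSpace B] [DiscreteTopology B] [CompactSpace X] [CompactSpace Y] {F : ι → X → Y}
    (hF : Equicontinuous F) (hcomm : ∀ i, Semiconj (F i) (shiftRes X hX) (shiftRes Y hY)) :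
    (range F).Finite := by
  have hc : IsLocallyConstant fun y : Y => y.1 0 :=
    (IsLocallyConstant.iff_continuous _).mpr
      ((continuous_apply (0 : ℤ)).comp continuous_subtype_val)
  have hinj : InjOn (fun (f : X → Y) x => (f x).1 0) (range F) := by
    rintro _ ⟨i, rfl⟩ _ ⟨j, rfl⟩ hij
    exact eq_of_semiconj_shiftRes_of_apply_zero_eq (hcomm i) (hcomm j) (congrFun hij)
  refine Set.Finite.of_finite_image ?_ hinj
  rw [← range_comp]
  exact finite_range_comp_of_equicontinuous hF hc

end SubshiftHom

theorem exists_iterate_add_eq_of_finite_range {α : Type*} {f : α → α}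
    (hf : (range fun n : ℕ => f^[n]).Finite) : ∃ k p : ℕ, 1 ≤ p ∧ f^[k + p] = f^[k] := by
  obtain ⟨k, m, hkm, heq⟩ := hf.exists_lt_map_eq_of_forall_mem (mem_range_self (f := (f^[·])))
  exact ⟨k, m - k, Nat.sub_pos_of_lt hkm, by rw [Nat.add_sub_cancel' hkm.le, heq]⟩

theorem stmt9_general [UniformSpace A] [DiscreteTopology A]
    (X : Set (ℤ → A)) (hXc : IsCompact X) (hXs : shift '' X = X)
    (g : X → X) (hcomm : g ∘ shiftRes X hXs = shiftRes X hXs ∘ g)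
    (hequi : Equicontinuous fun t : ℕ => g^[t]) :
    ∃ (k p : ℕ), 1 ≤ p ∧ g^[k + p] = g^[k] := by
  have : CompactSpace X := isCompact_iff_compactSpace.mp hXc
  have hg : Function.Commute g (shiftRes X hXs) := congrFun hcomm
  exact exists_iterate_add_eq_of_finite_range
    (finite_range_of_equicontinuous_of_semiconj_shiftRes hequi hg.iterate_left)

/-- an equicontinuous cellular automaton `g` on a subshift `X` (a continuous
self-map of `X` commuting with the restricted shift, whose family of iterates is
equicontinuous) is eventually periodic: `g^{k+p} = g^k` for some `k ≥ 0`, `p ≥ 1`. -/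
theorem stmt9 [Fintype A] [UniformSpace A] [DiscreteTopology A]
    (X : Set (ℤ → A)) (hXc : IsClosed X) (hXs : shift '' X = X)
    (g : X → X) (hg : Continuous g)
    (hcomm : g ∘ shiftRes X hXs = shiftRes X hXs ∘ g)
    (hequi : Equicontinuous fun t : ℕ => g^[t]) :
    ∃ (k p : ℕ), 1 ≤ p ∧ g^[k + p] = g^[k] :=
  stmt9_general X hXc.isCompact hXs g hcomm hequi

end Gls
end
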